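/- The alternating group A_5 satisfies the rewriting property P_10; that is, for every sequence of 10 elements x_1, ..., x_10 of A_5 there exists a non-identity permutation σ of {1,...,10} such that x_1 x_2 ⋯ x_10 = x_{σ(1)} x_{σ(2)} ⋯ x_{σ(10)}. -/

import Mathlib

/-- A group `G` has the rewriting property `Pₙ` if every sequence of `n` elements
can be rewritten by some non-identity permutation of its factors. -/
def RewProp (G : Type*) [Group G] (n : ℕ) : Prop :=
  ∀ x : Fin n → G, ∃ σ : Equiv.Perm (Fin n), σ ≠ 1 ∧
    (List.ofFn x).prod = (List.ofFn (x ∘ σ)).prod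

/-!
The standard polynomial `s_m = ∑ σ, sign σ • x_{σ 1} ⋯ x_{σ m}` detects rewritings: if `x_1 ⋯ x_m`
differs from all its proper rearrangements, then its coefficient in `s_m(x_1, …, x_m)`, computed in
a group algebra, is `1`. So a group whose group algebra embeds into a product of matrix rings of
degree at most `m / 2` satisfies `P_m`, by the Amitsur–Levitzki theorem that `s_m` vanishes on
`d × d` matrices for `m ≥ 2 d`. The algebra `ℂ[A₅]` is a product of five matrix algebras, as `A₅`
has five conjugacy classes, and the squares of their degrees add up to `60`. Neither `60 - 6²` nor
`60 - 7²` is a sum of four positive squares, so all degrees are at most `5`, and `m = 10` works.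

For Amitsur–Levitzki we follow Rosset. With `e_1, …, e_m` the generators of an exterior algebra, the
matrix `A = ∑ e_l x_l` has anticommuting entries and `A ^ m = e_1 ⋯ e_m • s_m(x_1, …, x_m)`. The
entries of `A²` commute, and anticommutation gives every positive power of `A²` trace zero; in the
absence of torsion `A²` is then nilpotent of index at most `d`, by Newton's identities. These come
from comparing coefficients in `adj(X - M) (X - M) = χ_M(X)`, as `adj(X - M)` has trace `χ_M'`.
Torsion is harmless since `s_m` is multilinear with integer coefficients.
-/

section Newton

open Matrix Polynomial

variable {R n : Type*} [CommRing R] [Fintype n] [DecidableEq n]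

theorem derivative_det (A : Matrix n n R[X]) :
    derivative A.det = ∑ i, (A.updateCol i fun j => derivative (A j i)).det := by
  simp_rw [det_apply, derivative_sum, derivative_smul, derivative_prod_finset, Finset.smul_sum]
  rw [Finset.sum_comm]
  refine Finset.sum_congr rfl fun i _ => Finset.sum_congr rfl fun σ _ => ?_
  rw [← Finset.prod_erase_mul _ _ (Finset.mem_univ i), updateCol_self]
  congr 2
  refine Finset.prod_congr rfl fun j hj => ?_
  rw [updateCol_ne (Finset.ne_of_mem_erase hj)]

theorem derivative_charpoly (M : Matrix n n R) :
    derivative M.charpoly = M.charmatrix.adjugate.trace := by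
  rw [charpoly, derivative_det]
  refine Finset.sum_congr rfl fun i _ => ?_
  have derivative_col : (fun j => derivative (M.charmatrix j i)) = Pi.single i 1 := by
    ext1 j
    obtain rfl | hj := eq_or_ne j i
    · simp
    · simp [hj]
  rw [derivative_col, ← cramer_apply, cramer_eq_adjugate_mulVec, mulVec_single_one, col_apply,
    diag_apply]

/-- The Faddeev–LeVerrier matrices of `M`: the coefficients of `adj(X - M)`, read as a polynomial
in `X` with matrix coefficients. They are polynomials in `M` whose traces are multiples of the
coefficients of the characteristic polynomial. -/
noncomputable def faddeevLeVerrier (M : Matrix n n R) (k : ℕ) : Matrix n n R :=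
  (matPolyEquiv M.charmatrix.adjugate).coeff k

theorem matPolyEquiv_adjugate_charmatrix_mul (M : Matrix n n R) :
    matPolyEquiv M.charmatrix.adjugate * (X - C M) =
      M.charpoly.map (algebraMap R (Matrix n n R)) := by
  rw [← matPolyEquiv_charmatrix, ← map_mul, adjugate_mul, ← charpoly, matPolyEquiv_smul_one]

theorem faddeevLeVerrier_zero_mul (M : Matrix n n R) :
    faddeevLeVerrier M 0 * M = -algebraMap R (Matrix n n R) (M.charpoly.coeff 0) := by
  have := congrArg (coeff · 0) (matPolyEquiv_adjugate_charmatrix_mul M)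
  simp only [mul_sub, coeff_sub, mul_coeff_zero, coeff_X_zero, mul_zero, zero_sub, coeff_C_zero,
    coeff_map] at this
  rw [← this, neg_neg, faddeevLeVerrier]

theorem faddeevLeVerrier_eq_succ_mul_add (M : Matrix n n R) (k : ℕ) :
    faddeevLeVerrier M k = faddeevLeVerrier M (k + 1) * M +
      algebraMap R (Matrix n n R) (M.charpoly.coeff (k + 1)) := by
  have := congrArg (coeff · (k + 1)) (matPolyEquiv_adjugate_charmatrix_mul M)
  simp only [mul_sub, coeff_sub, coeff_mul_X, coeff_mul_C, coeff_map] at this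
  rw [← this, faddeevLeVerrier, faddeevLeVerrier, add_sub_cancel]

theorem faddeevLeVerrier_mem_adjoin (M : Matrix n n R) (k : ℕ) :
    faddeevLeVerrier M k ∈ Algebra.adjoin R {M} := by
  by_cases hk : (matPolyEquiv M.charmatrix.adjugate).natDegree < k
  · rw [faddeevLeVerrier, coeff_eq_zero_of_natDegree_lt hk]
    exact zero_mem _
  · rw [faddeevLeVerrier_eq_succ_mul_add]
    exact add_mem (mul_mem (faddeevLeVerrier_mem_adjoin M (k + 1))
      (Algebra.self_mem_adjoin_singleton R M)) (algebraMap_mem _ _)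
termination_by (matPolyEquiv M.charmatrix.adjugate).natDegree + 1 - k

theorem trace_faddeevLeVerrier (M : Matrix n n R) (k : ℕ) :
    (faddeevLeVerrier M k).trace = M.charpoly.coeff (k + 1) * (k + 1) := by
  rw [← coeff_derivative, derivative_charpoly]
  simp [trace, faddeevLeVerrier, matPolyEquiv_coeff_apply]

theorem trace_faddeevLeVerrier_mul_self (M : Matrix n n R) (k : ℕ) :
    (faddeevLeVerrier M k * M).trace = (k - Fintype.card n) * M.charpoly.coeff k := by
  cases k with
  | zero =>
    rw [faddeevLeVerrier_zero_mul, trace_neg, Algebra.algebraMap_eq_smul_one, trace_smul, trace_one,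
      smul_eq_mul]
    push_cast
    ring
  | succ k =>
    have := congrArg trace (faddeevLeVerrier_eq_succ_mul_add M k)
    rw [trace_faddeevLeVerrier, trace_add, Algebra.algebraMap_eq_smul_one, trace_smul, trace_one,
      smul_eq_mul] at this
    push_cast
    linear_combination -this

variable {M : Matrix n n R}

theorem trace_mul_self_eq_zero_of_mem_adjoin (h : ∀ k, (M ^ (k + 1)).trace = 0)
    {P : Matrix n n R} (hP : P ∈ Algebra.adjoin R {M}) : (P * M).trace = 0 := by
  rw [Algebra.adjoin_singleton_eq_range_aeval] at hP
  obtain ⟨p, rfl⟩ := hP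
  simp [aeval_eq_sum_range, Finset.sum_mul, trace_sum, ← pow_succ, h]

theorem charpoly_eq_X_pow_of_trace_pow_eq_zero [IsAddTorsionFree R]
    (h : ∀ k, (M ^ (k + 1)).trace = 0) : M.charpoly = X ^ Fintype.card n := by
  nontriviality R
  ext k
  rw [coeff_X_pow]
  obtain hk | rfl | hk := lt_trichotomy k (Fintype.card n)
  · rw [if_neg hk.ne, ← nsmul_eq_zero_iff_right (Nat.sub_pos_of_lt hk).ne', nsmul_eq_mul,
      Nat.cast_sub hk.le, ← neg_sub, neg_mul, ← trace_faddeevLeVerrier_mul_self,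
      trace_mul_self_eq_zero_of_mem_adjoin h (faddeevLeVerrier_mem_adjoin M k), neg_zero]
  · rw [if_pos rfl]
    simpa [leadingCoeff, charpoly_natDegree_eq_dim] using M.charpoly_monic.leadingCoeff
  · rw [if_neg hk.ne', coeff_eq_zero_of_natDegree_lt (by rwa [charpoly_natDegree_eq_dim])]

theorem pow_card_eq_zero_of_trace_pow_eq_zero [IsAddTorsionFree R]
    (h : ∀ k, (M ^ (k + 1)).trace = 0) : M ^ Fintype.card n = 0 := by
  simpa [charpoly_eq_X_pow_of_trace_pow_eq_zero h] using aeval_self_charpoly M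

end Newton

section Anticommuting

open Matrix
open scoped IsMulCommutative

variable {E n : Type*} [Ring E]

/-- The subring generated by the products of two entries of `A`. If the entries of `A` anticommute,
this subring is commutative and contains the entries of `A * A`. -/
def evenEntrySubring (A : Matrix n n E) : Subring E :=
  Subring.closure {a | ∃ i j k l, A i j * A k l = a}

variable {A : Matrix n n E}

theorem commute_entry_of_mem_evenEntrySubring (h : ∀ i j k l, A i j * A k l = -(A k l * A i j))
    {s : E} (hs : s ∈ evenEntrySubring A) (i j : n) : Commute s (A i j) := by
  induction hs using Subring.closure_induction with
  | mem _ hx =>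
    obtain ⟨a, b, c, d, rfl⟩ := hx
    rw [commute_iff_eq, mul_assoc, h c d, mul_neg, ← mul_assoc, h a b, neg_mul, neg_neg, mul_assoc]
  | zero => exact .zero_left _
  | one => exact .one_left _
  | add _ _ _ _ hx hy => exact hx.add_left hy
  | neg _ _ hx => exact hx.neg_left
  | mul _ _ _ _ hx hy => exact hx.mul_left hy

theorem isMulCommutative_evenEntrySubring (h : ∀ i j k l, A i j * A k l = -(A k l * A i j)) :
    IsMulCommutative (evenEntrySubring A) := by
  refine Subring.isMulCommutative_closure ?_
  rintro _ ⟨i, j, k, l, rfl⟩ b hb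
  have commute_b := commute_entry_of_mem_evenEntrySubring h (Subring.subset_closure hb)
  exact ((commute_b i j).mul_right (commute_b k l)).symm.eq

variable [Fintype n]

theorem trace_mul_eq_neg_trace_mul {P : Matrix n n E}
    (h : ∀ i j k l, P i j * A k l = -(A k l * P i j)) : (P * A).trace = -(A * P).trace := by
  simp only [trace, diag_apply, mul_apply, h, Finset.sum_neg_distrib]
  rw [Finset.sum_comm]

variable [DecidableEq n]

theorem mul_self_mem_matrix_evenEntrySubring (A : Matrix n n E) :
    A * A ∈ (evenEntrySubring A).matrix := fun i j =>
  mul_apply (M := A) ▸ sum_mem fun l _ => Subring.subset_closure ⟨i, l, l, j, rfl⟩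

variable [IsAddTorsionFree E]

theorem trace_pow_mul_self_eq_zero (h : ∀ i j k l, A i j * A k l = -(A k l * A i j)) (k : ℕ) :
    ((A * A) ^ (k + 1)).trace = 0 := by
  have anticommute (i j k' l) :
      ((A * A) ^ k * A) i j * A k' l = -(A k' l * ((A * A) ^ k * A) i j) := by
    simp only [mul_apply, Finset.sum_mul, Finset.mul_sum, ← Finset.sum_neg_distrib]
    refine Finset.sum_congr rfl fun m _ => ?_
    have := commute_entry_of_mem_evenEntrySubring h
      (pow_mem (mul_self_mem_matrix_evenEntrySubring A) k i m) k' l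
    rw [mul_assoc, h, mul_neg, ← mul_assoc, this.eq, mul_assoc]
  have commute_pow : Commute A ((A * A) ^ k * A) :=
    (((Commute.refl A).mul_right (.refl A)).pow_right k).mul_right (.refl A)
  have := trace_mul_eq_neg_trace_mul anticommute
  rwa [commute_pow.eq, self_eq_neg, mul_assoc, ← pow_succ] at this

theorem pow_two_mul_card_eq_zero_of_anticommute
    (h : ∀ i j k l, A i j * A k l = -(A k l * A i j)) : A ^ (2 * Fintype.card n) = 0 := by
  let S := evenEntrySubring A
  have : IsMulCommutative S := isMulCommutative_evenEntrySubring h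
  have : IsAddTorsionFree S :=
    S.subtype_injective.isAddTorsionFree S.subtype.toAddMonoidHom
  let B : Matrix n n S := fun i j => ⟨(A * A) i j, mul_self_mem_matrix_evenEntrySubring A i j⟩
  have map_pow_B (k : ℕ) : (B ^ k).map S.subtype = (A * A) ^ k :=
    map_pow S.subtype.mapMatrix B k
  have B_nilpotent : B ^ Fintype.card n = 0 := by
    refine pow_card_eq_zero_of_trace_pow_eq_zero fun k => S.subtype_injective ?_
    rw [map_zero, AddMonoidHom.map_trace, map_pow_B, trace_pow_mul_self_eq_zero h]
  rw [pow_mul, pow_two, ← map_pow_B, B_nilpotent]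
  exact map_zero S.subtype.mapMatrix

end Anticommuting

section StandardPolynomial

open Equiv

variable {A B : Type*} [Ring A] [Ring B] {m : ℕ}

/-- The standard polynomial `∑ σ, sign σ • x (σ 0) * ⋯ * x (σ (m - 1))` in `m` noncommuting
variables. -/
def standardPolynomial (x : Fin m → A) : A :=
  ∑ σ : Perm (Fin m), Perm.sign σ • (List.ofFn (x ∘ σ)).prod

theorem map_standardPolynomial (f : A →+* B) (x : Fin m → A) :
    f (standardPolynomial x) = standardPolynomial (f ∘ x) := by
  simp only [standardPolynomial, map_sum, Units.smul_def, map_zsmul, map_list_prod, List.map_ofFn,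
    Function.comp_assoc]

theorem alternatization_mkPiAlgebraFin {R : Type*} [CommRing R] [Algebra R A] (x : Fin m → A) :
    MultilinearMap.alternatization (MultilinearMap.mkPiAlgebraFin R m A) x =
      standardPolynomial x := by
  simp [MultilinearMap.alternatization_apply, standardPolynomial, Function.comp_def]

end StandardPolynomial

section AmitsurLevitzki

open Matrix ExteriorAlgebra

theorem smul_map_mul_smul_map {R E n : Type*} [CommRing R] [Ring E] [Algebra R E] [Fintype n]
    (a b : E) (M N : Matrix n n R) :
    (a • M.map (algebraMap R E)) * (b • N.map (algebraMap R E)) =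
      (a * b) • (M * N).map (algebraMap R E) := by
  ext i j
  simp only [mul_apply, Matrix.smul_apply, Matrix.map_apply, smul_eq_mul, map_sum, map_mul,
    Finset.mul_sum]
  refine Finset.sum_congr rfl fun k _ => ?_
  rw [mul_assoc, ← mul_assoc (algebraMap R E _), Algebra.commutes, mul_assoc, mul_assoc]

theorem list_prod_map_smul_map {R E α n : Type*} [CommRing R] [Ring E] [Algebra R E] [Fintype n]
    [DecidableEq n] (e : α → E) (x : α → Matrix n n R) (l : List α) :
    (l.map fun a => e a • (x a).map (algebraMap R E)).prod =
      (l.map e).prod • (l.map x).prod.map (algebraMap R E) := by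
  induction l with
  | nil => simp
  | cons a l ih => simp only [List.map_cons, List.prod_cons, ih, smul_map_mul_smul_map]

variable {R n : Type*} [CommRing R] {m : ℕ}

theorem isAddTorsionFree_of_basis [IsAddTorsionFree R] {ι V : Type*} [AddCommGroup V] [Module R V]
    (b : Module.Basis ι R V) : IsAddTorsionFree V :=
  b.repr.injective.isAddTorsionFree b.repr.toAddMonoidHom

theorem ιMulti_mul_algebraMap_eq_zero_iff {V : Type*} [AddCommGroup V] [Module R V]
    (b : Module.Basis (Fin m) R V) {c : R} : ιMulti R m b * algebraMap R _ c = 0 ↔ c = 0 := by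
  refine ⟨fun h => ?_, fun h => by rw [h, map_zero, mul_zero]⟩
  have := congrArg (liftAlternating (Pi.single m b.det)) h
  rwa [← Algebra.commutes, ← Algebra.smul_def, map_smul, liftAlternating_apply_ιMulti,
    Pi.single_eq_same, Module.Basis.det_self, smul_eq_mul, mul_one, map_zero] at this

/-- The generic linear combination `∑ l, e l • x l` of the matrices `x`, whose coefficients `e l`
are the generators of an exterior algebra: its entries anticommute, and its powers encode
alternating sums of products of the `x l`. -/
noncomputable def exteriorCombination (x : Fin m → Matrix n n R) :
    Matrix n n (ExteriorAlgebra R (Fin m → R)) :=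
  ∑ l, ι R (Pi.basisFun R (Fin m) l) • (x l).map (algebraMap R _)

theorem exteriorCombination_apply (x : Fin m → Matrix n n R) (i j : n) :
    exteriorCombination x i j = ι R fun l => x l i j := by
  rw [exteriorCombination, Matrix.sum_apply, ← (Pi.basisFun R (Fin m)).sum_repr fun l => x l i j,
    map_sum]
  refine Finset.sum_congr rfl fun l _ => ?_
  rw [map_smul, Algebra.smul_def, Algebra.commutes, Pi.basisFun_repr, Matrix.smul_apply,
    Matrix.map_apply, smul_eq_mul]

variable [Fintype n] [DecidableEq n]

theorem exteriorCombination_pow_eq_sum (x : Fin m → Matrix n n R) :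
    exteriorCombination x ^ m = ∑ f : Fin m → Fin m,
      ιMulti R m (Pi.basisFun R (Fin m) ∘ f) • (List.ofFn (x ∘ f)).prod.map (algebraMap R _) := by
  let E := ExteriorAlgebra R (Fin m → R)
  let e (l : Fin m) : E := ι R (Pi.basisFun R (Fin m) l)
  let term (l : Fin m) : Matrix n n E := e l • (x l).map (algebraMap R E)
  calc exteriorCombination x ^ m
      = MultilinearMap.mkPiAlgebraFin R m (Matrix n n E) fun _ => ∑ l, term l :=
        (MultilinearMap.mkPiAlgebraFin_apply_const _).symm
    _ = ∑ f : Fin m → Fin m, (List.ofFn (term ∘ f)).prod := MultilinearMap.map_sum _ _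
    _ = _ := Finset.sum_congr rfl fun f _ => by
      have := list_prod_map_smul_map e x (List.ofFn f)
      rwa [List.map_ofFn, List.map_ofFn, List.map_ofFn] at this

theorem exteriorCombination_pow (x : Fin m → Matrix n n R) :
    exteriorCombination x ^ m =
      ιMulti R m (Pi.basisFun R (Fin m)) • (standardPolynomial x).map (algebraMap R _) := by
  rw [exteriorCombination_pow_eq_sum, standardPolynomial, ← RingHom.mapMatrix_apply, map_sum,
    Finset.smul_sum]
  symm
  refine Fintype.sum_of_injective (fun σ : Equiv.Perm (Fin m) => ⇑σ) DFunLike.coe_injective _ _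
    (fun f hf => ?_) fun σ => ?_
  · have f_not_injective : ¬ Function.Injective f := fun hinj =>
      hf ⟨Equiv.ofBijective f (Finite.injective_iff_bijective.mp hinj), rfl⟩
    rw [AlternatingMap.map_eq_zero_of_not_injective _ _ fun h => f_not_injective h.of_comp,
      zero_smul]
  · rw [AlternatingMap.map_perm, Units.smul_def, Units.smul_def, map_zsmul, smul_assoc, smul_comm,
      RingHom.mapMatrix_apply]

theorem standardPolynomial_matrix_eq_zero_of_isAddTorsionFree [IsAddTorsionFree R]
    (hm : 2 * Fintype.card n ≤ m) (x : Fin m → Matrix n n R) : standardPolynomial x = 0 := by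
  have : IsAddTorsionFree (ExteriorAlgebra R (Fin m → R)) :=
    isAddTorsionFree_of_basis (Pi.basisFun R (Fin m)).ExteriorAlgebra
  have pow_eq_zero : exteriorCombination x ^ m = 0 := by
    refine pow_eq_zero_of_le hm (pow_two_mul_card_eq_zero_of_anticommute fun i j k l => ?_)
    simp only [exteriorCombination_apply]
    exact eq_neg_of_add_eq_zero_left (ι_add_mul_swap _ _)
  rw [exteriorCombination_pow] at pow_eq_zero
  ext i j
  exact (ιMulti_mul_algebraMap_eq_zero_iff _).mp (congrFun₂ pow_eq_zero i j)

/-- The **Amitsur–Levitzki theorem**. -/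
theorem standardPolynomial_matrix_eq_zero (hm : 2 * Fintype.card n ≤ m)
    (x : Fin m → Matrix n n R) : standardPolynomial x = 0 := by
  have stdBasis_eq_map (p : n × n) :
      (Int.castRingHom R).mapMatrix (stdBasis ℤ n n p) = stdBasis R n n p := by
    obtain ⟨i, j⟩ := p
    rw [stdBasis_eq_single, stdBasis_eq_single, RingHom.mapMatrix_apply, map_single, map_one]
  have alternatization_eq_zero :
      (MultilinearMap.mkPiAlgebraFin R m (Matrix n n R)).alternatization = 0 := by
    refine (stdBasis R n n).ext_alternating fun v _ => ?_
    have := map_standardPolynomial (Int.castRingHom R).mapMatrix fun l => stdBasis ℤ n n (v l)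
    rw [standardPolynomial_matrix_eq_zero_of_isAddTorsionFree hm, map_zero, Function.comp_def,
      funext fun l => stdBasis_eq_map (v l)] at this
    rw [alternatization_mkPiAlgebraFin, ← this, AlternatingMap.zero_apply]
  rw [← alternatization_mkPiAlgebraFin (R := R), alternatization_eq_zero, AlternatingMap.zero_apply]

end AmitsurLevitzki

section RewritingCriterion

variable {k G : Type*} [Group G] [Ring k] [Nontrivial k] {m : ℕ}

theorem RewProp.of_standardPolynomial_eq_zero
    (h : ∀ x : Fin m → MonoidAlgebra k G, standardPolynomial x = 0) : RewProp G m := by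
  intro x
  by_contra! hx
  have coeff_eq_zero := congrArg (fun a => a.coeff (List.ofFn x).prod)
    (h (MonoidAlgebra.of k G ∘ x))
  have term_eq (σ : Equiv.Perm (Fin m)) : (List.ofFn ((MonoidAlgebra.of k G ∘ x) ∘ σ)).prod =
      MonoidAlgebra.single (List.ofFn (x ∘ σ)).prod 1 := by
    rw [← MonoidAlgebra.of_apply, map_list_prod, List.map_ofFn, Function.comp_assoc]
  simp only [standardPolynomial, term_eq, Units.smul_def, MonoidAlgebra.coeff_sum,
    Finsupp.finsetSum_apply, MonoidAlgebra.coeff_smul_apply, MonoidAlgebra.coeff_zero,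
    Finsupp.zero_apply] at coeff_eq_zero
  rw [Finset.sum_eq_single 1] at coeff_eq_zero
  · simp at coeff_eq_zero
  · intro σ _ hσ
    simp [(hx σ hσ).symm]
  · simp

theorem RewProp.of_injective_pi_matrix {ι : Type*} {n R : ι → Type*} [∀ i, Fintype (n i)]
    [∀ i, DecidableEq (n i)] [∀ i, CommRing (R i)]
    (f : MonoidAlgebra k G →+* ∀ i, Matrix (n i) (n i) (R i)) (hf : Function.Injective f)
    (hm : ∀ i, 2 * Fintype.card (n i) ≤ m) : RewProp G m := by
  refine .of_standardPolynomial_eq_zero (k := k) fun x => hf ?_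
  rw [map_standardPolynomial, map_zero]
  ext1 i
  calc standardPolynomial (f ∘ x) i
      = standardPolynomial (Pi.evalRingHom _ i ∘ f ∘ x) :=
        map_standardPolynomial (Pi.evalRingHom _ i) (f ∘ x)
    _ = 0 := standardPolynomial_matrix_eq_zero (hm i) _

end RewritingCriterion

section Center

variable {k : Type*} [CommRing k]

theorem mem_center_monoidAlgebra_iff {G : Type*} [Group G] {a : MonoidAlgebra k G} :
    a ∈ Subalgebra.center k (MonoidAlgebra k G) ↔
      ∀ g h : G, a.coeff (g * h) = a.coeff (h * g) := by
  rw [Subalgebra.mem_center_iff]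
  constructor
  · intro ha g h
    simpa using congrArg (fun b => b.coeff h) (ha (.single g⁻¹ 1))
  · intro ha b
    induction b using MonoidAlgebra.induction_linear with
    | zero => simp
    | add b c hb hc => rw [add_mul, mul_add, hb, hc]
    | single g r =>
      ext h
      rw [MonoidAlgebra.coeff_single_mul_apply, MonoidAlgebra.coeff_mul_single_apply, ha, mul_comm]

theorem finrank_center_congr {A B : Type*} [Ring A] [Algebra k A] [Ring B] [Algebra k B]
    (e : A ≃ₐ[k] B) :
    Module.finrank k (Subalgebra.center k A) = Module.finrank k (Subalgebra.center k B) :=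
  LinearEquiv.finrank_eq
    { Subring.centerCongr e.toRingEquiv with
      map_smul' := fun c x => Subtype.ext (map_smul e c (x : A)) }

variable {G : Type*} [Group G] [Finite G]

variable (k G) in
/-- The element `∑ g, c [g] • g` of the group algebra, for a function `c` on conjugacy classes;
these elements make up its center. -/
noncomputable def classFunctionSum :
    (ConjClasses G → k) →ₗ[k] MonoidAlgebra k G :=
  (MonoidAlgebra.coeffLinearEquiv k).symm.toLinearMap ∘ₗ
    (Finsupp.linearEquivFunOnFinite k k G).symm.toLinearMap ∘ₗ LinearMap.funLeft k k ConjClasses.mk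

theorem coeff_classFunctionSum (c : ConjClasses G → k) (g : G) :
    (classFunctionSum k G c).coeff g = c (ConjClasses.mk g) := rfl

theorem classFunctionSum_injective : Function.Injective (classFunctionSum k G) := fun c c' h => by
  ext q
  obtain ⟨g, rfl⟩ := ConjClasses.mk_surjective q
  rw [← coeff_classFunctionSum c, h, coeff_classFunctionSum]

theorem range_classFunctionSum : LinearMap.range (classFunctionSum k G) =
    Subalgebra.toSubmodule (Subalgebra.center k (MonoidAlgebra k G)) := by
  ext a
  rw [Subalgebra.mem_toSubmodule, mem_center_monoidAlgebra_iff]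
  constructor
  · rintro ⟨c, rfl⟩ g h
    rw [coeff_classFunctionSum, coeff_classFunctionSum, ConjClasses.mk_eq_mk_iff_isConj.mpr]
    exact isConj_iff.mpr ⟨h, by group⟩
  · intro ha
    refine ⟨Quotient.lift a.coeff fun g h hgh => ?_, MonoidAlgebra.ext (Finsupp.ext fun g => rfl)⟩
    obtain ⟨c, rfl⟩ := isConj_iff.mp hgh
    rw [ha, inv_mul_cancel_left]

variable [Nontrivial k]

variable (k G) in
theorem finrank_center_monoidAlgebra :
    Module.finrank k (Subalgebra.center k (MonoidAlgebra k G)) = Nat.card (ConjClasses G) := by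
  have := Fintype.ofFinite (ConjClasses G)
  have := LinearMap.finrank_range_of_inj (classFunctionSum_injective (k := k) (G := G))
  rwa [range_classFunctionSum, Module.finrank_fintype_fun_eq_card,
    ← Nat.card_eq_fintype_card] at this

variable (k) in
theorem finrank_center_pi {ι : Type*} [Fintype ι] (A : ι → Type*) [∀ i, Ring (A i)]
    [∀ i, Algebra k (A i)] [∀ i, FaithfulSMul k (A i)] [∀ i, Algebra.IsCentral k (A i)] :
    Module.finrank k (Subalgebra.center k (∀ i, A i)) = Fintype.card ι := by
  let f : (ι → k) →ₗ[k] ∀ i, A i :=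
    LinearMap.pi fun i => Algebra.linearMap k (A i) ∘ₗ LinearMap.proj i
  have f_injective : Function.Injective f := fun c c' h => by
    ext i
    exact FaithfulSMul.algebraMap_injective k (A i) (congrFun h i)
  have range_f : LinearMap.range f = Subalgebra.toSubmodule (Subalgebra.center k (∀ i, A i)) := by
    ext a
    simp only [Subalgebra.mem_toSubmodule, Subalgebra.center_pi, Subalgebra.mem_pi, Set.mem_univ,
      Algebra.IsCentral.mem_center_iff, forall_const, Classical.skolem, LinearMap.mem_range]
    exact exists_congr fun c => by rw [funext_iff]; exact forall_congr' fun i => eq_comm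
  have := LinearMap.finrank_range_of_inj f_injective
  rwa [range_f, Module.finrank_fintype_fun_eq_card] at this

end Center

section GroupAlgebraBlocks

variable {k G ι : Type*} {n : ι → Type*} [Field k] [Group G] [Finite G] [Fintype ι]
  [∀ i, Fintype (n i)] [∀ i, DecidableEq (n i)]

theorem card_eq_card_conjClasses_of_algEquiv_pi_matrix [∀ i, Nonempty (n i)]
    (e : MonoidAlgebra k G ≃ₐ[k] ∀ i, Matrix (n i) (n i) k) :
    Fintype.card ι = Nat.card (ConjClasses G) := by
  rw [← finrank_center_monoidAlgebra k G, finrank_center_congr e, finrank_center_pi]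

theorem sum_card_sq_eq_card_of_algEquiv_pi_matrix
    (e : MonoidAlgebra k G ≃ₐ[k] ∀ i, Matrix (n i) (n i) k) :
    ∑ i, Fintype.card (n i) ^ 2 = Nat.card G := by
  have := Fintype.ofFinite G
  have finrank_eq := e.toLinearEquiv.finrank_eq
  rw [(MonoidAlgebra.coeffLinearEquiv k).finrank_eq, Module.finrank_finsupp_self,
    Module.finrank_pi_fintype] at finrank_eq
  simpa [Module.finrank_matrix, pow_two] using finrank_eq.symm

end GroupAlgebraBlocks

section AlternatingGroupFive

theorem nat_card_alternatingGroup_five : Nat.card (alternatingGroup (Fin 5)) = 60 := by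
  rw [nat_card_alternatingGroup, Nat.card_fin]
  rfl

set_option maxRecDepth 10000 in
theorem nat_card_commute_alternatingGroup_five :
    Nat.card {p : alternatingGroup (Fin 5) × alternatingGroup (Fin 5) // Commute p.1 p.2} =
      300 := by
  rw [Nat.card_congr (Equiv.subtypeProdEquivSigmaSubtype Commute), Nat.card_sigma]
  simp only [Nat.card_eq_fintype_card, commute_iff_eq]
  decide +kernel

theorem nat_card_conjClasses_alternatingGroup_five :
    Nat.card (ConjClasses (alternatingGroup (Fin 5))) = 5 := by
  have := card_comm_eq_card_conjClasses_mul_card (alternatingGroup (Fin 5))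
  rw [nat_card_commute_alternatingGroup_five, nat_card_alternatingGroup_five] at this
  lia

theorem le_five_of_sum_sq_eq_sixty {d : Fin 5 → ℕ} (hpos : ∀ i, 0 < d i)
    (hsum : ∑ i, d i ^ 2 = 60) (i : Fin 5) : d i ≤ 5 := by
  have not_sum_four_pos_sq : ∀ a b c d : Fin 5, 0 < a → 0 < b → 0 < c → 0 < d →
      (a : ℕ) ^ 2 + b ^ 2 + c ^ 2 + d ^ 2 ≠ 60 - 6 ^ 2 ∧
      (a : ℕ) ^ 2 + b ^ 2 + c ^ 2 + d ^ 2 ≠ 60 - 7 ^ 2 := by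
    decide +kernel
  by_contra! five_lt
  rw [Fin.sum_univ_succAbove _ i] at hsum
  have other_lt (j : Fin 4) : d (i.succAbove j) < 5 := by
    have := Finset.single_le_sum (fun j _ => Nat.zero_le (d (i.succAbove j) ^ 2))
      (Finset.mem_univ j)
    nlinarith
  obtain ⟨ne_six, ne_seven⟩ := not_sum_four_pos_sq ⟨_, other_lt 0⟩ ⟨_, other_lt 1⟩ ⟨_, other_lt 2⟩
    ⟨_, other_lt 3⟩ (hpos _) (hpos _) (hpos _) (hpos _)
  rw [Fin.sum_univ_four] at hsum
  obtain h | h : d i = 6 ∨ d i = 7 := by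
    have : d i < 8 := by nlinarith
    lia
  · rw [h] at hsum
    exact ne_six (by lia)
  · rw [h] at hsum
    exact ne_seven (by lia)

end AlternatingGroupFive

/-- The alternating group `A₅` satisfies the rewriting property `P₁₀`. -/
theorem A5_rewritable_ten : RewProp (alternatingGroup (Fin 5)) 10 := by
  obtain ⟨r, d, d_ne_zero, ⟨e⟩⟩ := IsSemisimpleRing.exists_algEquiv_pi_matrix_of_isAlgClosed ℂ
    (MonoidAlgebra ℂ (alternatingGroup (Fin 5)))
  have card_blocks := card_eq_card_conjClasses_of_algEquiv_pi_matrix e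
  rw [nat_card_conjClasses_alternatingGroup_five, Fintype.card_fin] at card_blocks
  have sum_sq := sum_card_sq_eq_card_of_algEquiv_pi_matrix e
  simp only [nat_card_alternatingGroup_five, Fintype.card_fin] at sum_sq
  subst card_blocks
  refine RewProp.of_injective_pi_matrix e.toRingEquiv.toRingHom e.injective fun i => ?_
  have := le_five_of_sum_sq_eq_sixty (fun i => Nat.pos_of_neZero (d i)) sum_sq i
  rw [Fintype.card_fin]
  lia
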